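/- Let F be an algebraically closed field with characteristic ≠ 2, and let b, c ∈ F with bc ≠ 1 and b ≠ c. Then the automorphism group of the algebra E1(b,c) with MSC [[1,0,0,b],[c,0,0,1]] is trivial: Aut(E1(b,c)) = {I}, where I is the 2×2 identity matrix. -/

import Mathlib

open Matrix Kronecker

variable {F : Type*}

/-- The Kronecker (tensor) product of two `2 × 2` matrices, realized as a `4 × 4` matrix;
rows/columns are indexed in row-major order by the pairs `(1,1), (1,2), (2,1), (2,2)`. -/
def kron [CommRing F] (g h : Matrix (Fin 2) (Fin 2) F) : Matrix (Fin 4) (Fin 4) F :=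
  Matrix.reindex finProdFinEquiv finProdFinEquiv (g ⊗ₖ h)

/-- Two `2`-dimensional algebras given by matrices of structure constants `A, B`
are isomorphic iff `B = g · A · (g⁻¹ ⊗ g⁻¹)` for some `g ∈ GL(2, F)`. -/
def Isomorphic [Field F] (A B : Matrix (Fin 2) (Fin 4) F) : Prop :=
  ∃ g : GL (Fin 2) F,
    B = (g : Matrix (Fin 2) (Fin 2) F) * A *
        kron ((↑(g⁻¹) : Matrix (Fin 2) (Fin 2) F)) ((↑(g⁻¹) : Matrix (Fin 2) (Fin 2) F))

/-- The automorphism group of the algebra with MSC `E`, as a set of (invertible) `2 × 2`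
matrices: `Aut(E) = {g ∈ GL(2,F) : g·E = E·(g ⊗ g)}`. -/
def Aut [Field F] (E : Matrix (Fin 2) (Fin 4) F) : Set (Matrix (Fin 2) (Fin 2) F) :=
  {g | IsUnit g ∧ g * E = E * kron g g}

/-- The derivation algebra of the algebra with MSC `E`:
`Der(E) = { D : E·(D ⊗ I + I ⊗ D) = D·E }`. -/
def Der [Field F] (E : Matrix (Fin 2) (Fin 4) F) : Set (Matrix (Fin 2) (Fin 2) F) :=
  {D | E * (kron D 1 + kron 1 D) = D * E}

/-!
In the algebra `E₁(b, c)` the distinct basis vectors multiply to zero, so it is an evolution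
algebra, and its structure matrix `!![1, b; c, 1]` is invertible because `b * c ≠ 1`. Applying an
automorphism `g` to `e₀ * e₁ = 0` gives a vanishing combination of the squares `e₀ * e₀` and
`e₁ * e₁`, which are linearly independent, so each row of `g` has a zero entry. As `g` is
invertible, it is diagonal or antidiagonal. Comparing `g (eᵢ * eᵢ)` with `g eᵢ * g eᵢ` makes a
diagonal `g` the identity, while an antidiagonal `g` must be the swap of `e₀` and `e₁`, which
multiplies correctly only if `b = c`.
-/

section EvolutionAlgebra

variable {R : Type*} [CommRing R]

/-- The row-major numbering of pairs of basis vectors by which `kron` indexes its rows and columns,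
typed with `Fin 4` in place of `Fin (2 * 2)`. -/
def pairEquiv : Fin 2 × Fin 2 ≃ Fin 4 := finProdFinEquiv

/-- The matrix of structure constants of the two-dimensional evolution algebra with structure
matrix `M`: the products of distinct basis vectors vanish and the square of the `k`-th basis vector
is the `k`-th column of `M`. The columns are indexed by `pairEquiv`, as in `kron`. -/
def evolutionMSC (M : Matrix (Fin 2) (Fin 2) R) : Matrix (Fin 2) (Fin 4) R :=
  Matrix.of fun i =>
    (fun k : Fin 2 × Fin 2 => if k.1 = k.2 then M i k.1 else 0) ∘ pairEquiv.symm

lemma evolutionMSC_fin_two (a b c d : R) :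
    evolutionMSC !![a, b; c, d] = !![a, 0, 0, b; c, 0, 0, d] := by
  ext i j
  fin_cases i <;> fin_cases j <;> rfl

lemma mul_evolutionMSC_apply (g M : Matrix (Fin 2) (Fin 2) R) (i : Fin 2) (k : Fin 2 × Fin 2) :
    (g * evolutionMSC M) i (pairEquiv k) = if k.1 = k.2 then (g * M) i k.1 else 0 := by
  split_ifs with hk <;> simp [evolutionMSC, Matrix.mul_apply, hk]

lemma kron_apply (g h : Matrix (Fin 2) (Fin 2) R) (k l : Fin 2 × Fin 2) :
    kron g h (pairEquiv k) (pairEquiv l) = g k.1 l.1 * h k.2 l.2 := by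
  simp [kron, pairEquiv]

lemma evolutionMSC_mul_kron_apply (M g h : Matrix (Fin 2) (Fin 2) R) (i : Fin 2)
    (k : Fin 2 × Fin 2) :
    (evolutionMSC M * kron g h) i (pairEquiv k) = (M *ᵥ (g.col k.1 * h.col k.2)) i := by
  rw [Matrix.mul_apply, ← pairEquiv.sum_comp, Fintype.sum_prod_type]
  simp [evolutionMSC, kron_apply, Matrix.mulVec, dotProduct, Matrix.col]

lemma mul_evolutionMSC_eq_iff {g M : Matrix (Fin 2) (Fin 2) R} :
    g * evolutionMSC M = evolutionMSC M * kron g g ↔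
      g * M = M * (g ⊙ g) ∧ M *ᵥ (g.col 0 * g.col 1) = 0 := by
  have hsq (i j : Fin 2) : (M * (g ⊙ g)) i j = (M *ᵥ (g.col j * g.col j)) i := rfl
  have hprod : g * evolutionMSC M = evolutionMSC M * kron g g ↔ ∀ i (k : Fin 2 × Fin 2),
      (if k.1 = k.2 then (g * M) i k.1 else 0) = (M *ᵥ (g.col k.1 * g.col k.2)) i := by
    simp only [← Matrix.ext_iff, ← mul_evolutionMSC_apply, ← evolutionMSC_mul_kron_apply,
      pairEquiv.forall_congr_left, Equiv.apply_symm_apply]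
  rw [hprod]
  constructor
  · intro h
    constructor
    · ext i j
      simpa [hsq] using h i (j, j)
    · ext i
      simpa using (h i (0, 1)).symm
  · rintro ⟨hdiag, hoff⟩ i ⟨j, l⟩
    fin_cases j <;> fin_cases l <;> simp [hdiag, hsq, hoff, mul_comm (g.col 1) (g.col 0)]

end EvolutionAlgebra

section Monomial

variable {R : Type*} [CommRing R] [NoZeroDivisors R]

lemma isDiag_or_diag_eq_zero {g : Matrix (Fin 2) (Fin 2) R} (hdet : g.det ≠ 0)
    (hcol : g.col 0 * g.col 1 = 0) : g.IsDiag ∨ g.diag = 0 := by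
  have hrow (i : Fin 2) : g i 0 = 0 ∨ g i 1 = 0 := mul_eq_zero.mp (congrFun hcol i)
  rw [Matrix.det_fin_two] at hdet
  rcases hrow 0 with h00 | h01 <;> rcases hrow 1 with h10 | h11
  · simp [h00, h10] at hdet
  · right
    ext i
    fin_cases i
    exacts [h00, h11]
  · left
    intro i j hij
    fin_cases i <;> fin_cases j
    exacts [absurd rfl hij, h01, h10, absurd rfl hij]
  · simp [h01, h11] at hdet

lemma eq_one_of_isDiag_of_mul_eq_mul_hadamard_self {n : Type*} [Fintype n] [DecidableEq n]
    {g M : Matrix n n R} (hg : g.IsDiag) (hdet : g.det ≠ 0) (hM : ∀ i, M i i ≠ 0)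
    (h : g * M = M * (g ⊙ g)) : g = 1 := by
  have : Nontrivial R := nontrivial_of_ne _ _ hdet
  obtain ⟨d, rfl⟩ : ∃ d, g = diagonal d := ⟨g.diag, hg.diagonal_diag.symm⟩
  rw [det_diagonal, Finset.prod_ne_zero_iff] at hdet
  rw [diagonal_hadamard_diagonal] at h
  rw [← diagonal_one]
  congr 1
  ext i
  have hentry : d i * M i i = M i i * (d i * d i) := by
    simpa only [diagonal_mul, mul_diagonal, Pi.mul_apply] using congrFun₂ h i i
  apply mul_left_cancel₀ (mul_ne_zero (hdet i (Finset.mem_univ i)) (hM i))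
  linear_combination -hentry

lemma eq_of_diag_eq_zero_of_mul_eq_mul_hadamard_self {g : Matrix (Fin 2) (Fin 2) R} {b c : R}
    (hg : g.diag = 0) (hdet : g.det ≠ 0) (h : g * !![1, b; c, 1] = !![1, b; c, 1] * (g ⊙ g)) :
    b = c := by
  have h00 : g 0 0 = 0 := congrFun hg 0
  have h11 : g 1 1 = 0 := congrFun hg 1
  obtain ⟨h01, h10⟩ : g 0 1 ≠ 0 ∧ g 1 0 ≠ 0 := by
    simpa [Matrix.det_fin_two, h00, h11] using hdet
  have hq : g 0 1 = g 0 1 * g 0 1 := by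
    simpa [Matrix.mul_apply, h00, h11] using congrFun₂ h 0 1
  have hr : g 1 0 = g 1 0 * g 1 0 := by
    simpa [Matrix.mul_apply, h00, h11] using congrFun₂ h 1 0
  have hbc : g 0 1 * c = b * (g 1 0 * g 1 0) := by
    simpa [Matrix.mul_apply, h00, h11] using congrFun₂ h 0 0
  rw [← hr, (mul_eq_left₀ h01).mp hq.symm, (mul_eq_left₀ h10).mp hr.symm] at hbc
  simpa using hbc.symm

end Monomial

lemma mem_Aut_evolutionMSC_iff [Field F] {g M : Matrix (Fin 2) (Fin 2) F} (hM : M.det ≠ 0) :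
    g ∈ Aut (evolutionMSC M) ↔
      g.det ≠ 0 ∧ g * M = M * (g ⊙ g) ∧ g.col 0 * g.col 1 = 0 := by
  have hker : M *ᵥ (g.col 0 * g.col 1) = 0 ↔ g.col 0 * g.col 1 = 0 :=
    ⟨eq_zero_of_mulVec_eq_zero hM, fun h => by rw [h, mulVec_zero]⟩
  rw [Aut, Set.mem_ofPred_eq, isUnit_iff_isUnit_det, isUnit_iff_ne_zero, mul_evolutionMSC_eq_iff,
    hker]

theorem aut_E1_of_ne_general [Field F] (b c : F) (hbc : b * c ≠ 1) (hne : b ≠ c) :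
    Aut (!![1, 0, 0, b; c, 0, 0, 1] : Matrix (Fin 2) (Fin 4) F) = {1} := by
  have hM : (!![1, b; c, 1]).det ≠ 0 := by
    simpa [det_fin_two_of, sub_eq_zero] using hbc.symm
  rw [← evolutionMSC_fin_two]
  ext g
  rw [mem_Aut_evolutionMSC_iff hM, Set.mem_singleton_iff]
  constructor
  · rintro ⟨hdet, hsq, hcol⟩
    rcases isDiag_or_diag_eq_zero hdet hcol with hdiag | hanti
    · refine eq_one_of_isDiag_of_mul_eq_mul_hadamard_self hdiag hdet (fun i => ?_) hsq
      fin_cases i <;> exact one_ne_zero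
    · exact absurd (eq_of_diag_eq_zero_of_mul_eq_mul_hadamard_self hanti hdet hsq) hne
  · rintro rfl
    refine ⟨by simp, by simp [hadamard_one], ?_⟩
    ext i
    fin_cases i <;> simp [Matrix.col]

theorem aut_E1_of_ne (F : Type*) [Field F] [IsAlgClosed F] (hchar : ringChar F ≠ 2)
    (b c : F) (hbc : b * c ≠ 1) (hne : b ≠ c) :
    Aut (!![1, 0, 0, b; c, 0, 0, 1] : Matrix (Fin 2) (Fin 4) F) = {1} :=
  aut_E1_of_ne_general b c hbc hne
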